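/- For integers M ≥ 2, K with 2 ≤ K ≤ M, N > 0, and real r with 0 < r ≤ r_th := K(M−1)/(M(K−1)), the two thresholds p_0(r) = min( Kr(K−1) / (K(M−1) + r(K−1)(K/N − 1)), 1) and p_1(r) = min( (K − r(K−1)) / (1 + (K − r(K−1))(1/N − 1/K)), 1) satisfy p_0(r) ≤ p_1(r), provided K − r(K−1) ≥ 0 and all denominators are positive. -/

import Mathlib

/-- Adaptive caching thresholds: p_0(r) ≤ p_1(r) for 0 < r ≤ r_th. -/
theorem stmt_10 (M K : ℕ) (N r : ℝ)
    (hM : 2 ≤ M) (hK : 2 ≤ K) (hMK : K ≤ M) (hN : 0 < N)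
    (hr : 0 < r) (hrth : r ≤ (K : ℝ) * ((M : ℝ) - 1) / ((M : ℝ) * ((K : ℝ) - 1)))
    (hnum : 0 ≤ (K : ℝ) - r * ((K : ℝ) - 1))
    (hden0 : 0 < (K : ℝ) * ((M : ℝ) - 1) + r * ((K : ℝ) - 1) * ((K : ℝ) / N - 1))
    (hden1 : 0 < 1 + ((K : ℝ) - r * ((K : ℝ) - 1)) * (1 / N - 1 / (K : ℝ))) :
    min ((K : ℝ) * r * ((K : ℝ) - 1)
        / ((K : ℝ) * ((M : ℝ) - 1) + r * ((K : ℝ) - 1) * ((K : ℝ) / N - 1))) 1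
      ≤ min (((K : ℝ) - r * ((K : ℝ) - 1))
        / (1 + ((K : ℝ) - r * ((K : ℝ) - 1)) * (1 / N - 1 / (K : ℝ)))) 1 := by
  have hK1 : (0 : ℝ) < (K : ℝ) - 1 := by
    have : (2 : ℝ) ≤ K := by exact_mod_cast hK
    linarith
  have hK0 : (0 : ℝ) < K := by linarith
  have hM0 : (0 : ℝ) < M := by exact_mod_cast (by omega : 0 < M)
  rw [le_div_iff₀ (mul_pos hM0 hK1)] at hrth
  refine min_le_min_right 1 ?_
  rw [div_le_div_iff₀ hden0 hden1]
  have hdiff : ((K : ℝ) - r * ((K : ℝ) - 1)) *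
        ((K : ℝ) * ((M : ℝ) - 1) + r * ((K : ℝ) - 1) * ((K : ℝ) / N - 1))
      - (K : ℝ) * r * ((K : ℝ) - 1) *
        (1 + ((K : ℝ) - r * ((K : ℝ) - 1)) * (1 / N - 1 / (K : ℝ)))
      = (K : ℝ) * ((K : ℝ) * ((M : ℝ) - 1) - r * ((M : ℝ) * ((K : ℝ) - 1))) := by
    field_simp
    ring
  have := mul_nonneg hK0.le (sub_nonneg.mpr hrth)
  linarith
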